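/- Let θ be a point of the complex upper half-plane ℍ that is imaginary quadratic, i.e., θ is algebraic over ℚ of degree 2. Then the value j(θ) = 1728 · g₂(θ)³ / ( g₂(θ)³ − 27·g₃(θ)² ) of the elliptic modular function j is an algebraic integer (it is integral over ℤ). -/

import Mathlib

/-!
Integrality of singular moduli, by a variant of the modular equation in which the polynomial itself
is never constructed.

The lattice sums give `j = E₄³ / Δ` (`jfun_eq`). An imaginary quadratic `θ` is fixed by an integral
matrix whose determinant `N` is positive and not a square (`exists_fixing_matrix`). For a matrix `A`
of determinant `N` put `K_A = E₄³ · Δ|A - E₄³|A · Δ`, which has weight `24` and vanishes at the fixed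
points of `A`. It depends only on the class of `A` in `SL(2, ℤ) \ Mat N`, and `SL(2, ℤ)` permutes
the `K_A` (`cross_smul`, `cross_slash`), so the product of the `K_A` over the finitely many classes
is a modular form of level one vanishing at `θ`.

For `A = (a, b; 0, d)` the two terms of `K_A` have orders `a²` and `N` in `Q = exp (2πiτ / N)`, with
leading coefficients that are units of the ring of algebraic integers, up to a common scalar. Since
`N` is not a square the orders differ, so the lowest coefficient of `K_A` is a unit after scaling
(`cross_expansion`), and so is that of the product. This is where the non-square condition enters,
as in Kronecker's argument that `Φ_N(X, X)` has leading coefficient `±1`.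

Finally, by the `q`-expansion principle (`exists_polynomial`) a form of weight `12m` with algebraic
integer coefficients is `Δ ^ m` times a polynomial in `j` over the algebraic integers, whose
coefficient of `j ^ m` is the constant term of the form. After division by powers of `Δ` that constant
term is a unit, so evaluation at `θ` gives a monic equation for `j(θ)`
(`isIntegral_of_nice`).
-/

open scoped Real

/-- The point `a ω₁ + b ω₂` of the lattice spanned by `ω₁, ω₂`. -/
noncomputable def latticePt (ω₁ ω₂ : ℂ) (p : ℤ × ℤ) : ℂ := p.1 * ω₁ + p.2 * ω₂

/-- The Weierstrass ℘-function relative to the lattice `ℤω₁ + ℤω₂`: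
`℘(z;Λ) = 1/z² + Σ_{ω ∈ Λ∖{0}} (1/(z−ω)² − 1/ω²)`. -/
noncomputable def wp (ω₁ ω₂ z : ℂ) : ℂ :=
  1 / z ^ 2 + ∑' p : {p : ℤ × ℤ // p ≠ 0},
    (1 / (z - latticePt ω₁ ω₂ p.1) ^ 2 - 1 / latticePt ω₁ ω₂ p.1 ^ 2)

/-- `℘_{[r,s]}(τ) = ℘(rτ + s; [τ,1])`. -/
noncomputable def wprs (r s : ℚ) (τ : ℂ) : ℂ := wp τ 1 ((r : ℂ) * τ + (s : ℂ))

/-- `q^x := e^{2πixτ}`. -/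
noncomputable def qpow (τ : ℂ) (x : ℝ) : ℂ := Complex.exp (2 * (π : ℂ) * Complex.I * (x : ℂ) * τ)

/-- The Siegel function `g_{[r,s]}(τ)`. -/
noncomputable def siegel (r s : ℚ) (τ : ℂ) : ℂ :=
  -qpow τ ((1/2) * ((r : ℝ) ^ 2 - (r : ℝ) + 1/6)) *
    Complex.exp ((π : ℂ) * Complex.I * (s : ℂ) * ((r : ℂ) - 1)) *
    (1 - qpow τ (r : ℝ) * Complex.exp (2 * (π : ℂ) * Complex.I * (s : ℂ))) *
    ∏' n : ℕ, ((1 - qpow τ ((n + 1 : ℝ) + (r : ℝ)) * Complex.exp (2 * (π : ℂ) * Complex.I * (s : ℂ))) *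
      (1 - qpow τ ((n + 1 : ℝ) - (r : ℝ)) * Complex.exp (-(2 * (π : ℂ) * Complex.I * (s : ℂ)))))

/-- The Dedekind eta function with the paper's normalization
`η(τ) = √(2π) e^{πi/4} q^{1/24} ∏_{n≥1} (1 − qⁿ)`. -/
noncomputable def eta (τ : ℂ) : ℂ :=
  (Real.sqrt (2 * π) : ℂ) * Complex.exp ((π : ℂ) * Complex.I / 4) * qpow τ (1/24) *
    ∏' n : ℕ, (1 - qpow τ (n + 1 : ℝ))

/-- `g₂(τ) = 60 Σ_{ω ∈ [τ,1]∖{0}} ω⁻⁴`. -/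
noncomputable def g2 (τ : ℂ) : ℂ := 60 * ∑' p : {p : ℤ × ℤ // p ≠ 0}, 1 / latticePt τ 1 p.1 ^ 4

/-- `g₃(τ) = 140 Σ_{ω ∈ [τ,1]∖{0}} ω⁻⁶`. -/
noncomputable def g3 (τ : ℂ) : ℂ := 140 * ∑' p : {p : ℤ × ℤ // p ≠ 0}, 1 / latticePt τ 1 p.1 ^ 6

/-- The elliptic modular function `j(τ) = 1728 g₂(τ)³ / (g₂(τ)³ − 27 g₃(τ)²)`. -/
noncomputable def jfun (τ : ℂ) : ℂ := 1728 * g2 τ ^ 3 / (g2 τ ^ 3 - 27 * g3 τ ^ 2)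

/-- The Weierstrass unit `h_{m,n}(τ)`. -/
noncomputable def hweier (m n : ℕ) (τ : ℂ) : ℂ :=
  (wprs 0 (1 / (m * n : ℚ)) τ - wprs (1 / (m : ℚ)) 0 τ) /
    (wprs 0 (1 / (m : ℚ)) τ - wprs (1 / (m : ℚ)) 0 τ)

namespace CMIntegral

open UpperHalfPlane Function MatrixGroups ModularForm EisensteinSeries
open scoped Manifold

/-! ### Expansions with algebraic integer coefficients -/

/-- The ring of all algebraic integers in `ℂ`. -/
abbrev AInt := integralClosure ℤ ℂ

/-- `F` is the sum of the power series `p`, with algebraic integer coefficients, in the local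
parameter `exp (2πiτ / h)` at `i∞`, at every point `τ` of the upper half-plane. -/
def HasQExp (h : ℝ) (F : ℍ → ℂ) (p : PowerSeries AInt) : Prop :=
  ∀ τ : ℍ, HasSum (fun m ↦ ((p.coeff m : AInt) : ℂ) * Periodic.qParam h τ ^ m) (F τ)

/-- The lowest coefficient of `p` is a unit. Units being closed under products, so is this property;
it is the reason why the polynomial satisfied by `j(θ)` can be made monic. -/
def Nice (p : PowerSeries AInt) : Prop :=
  ∃ (n : ℕ) (w : PowerSeries AInt), IsUnit w ∧ p = PowerSeries.X ^ n * w

lemma Nice.mul {p q : PowerSeries AInt} (hp : Nice p) (hq : Nice q) : Nice (p * q) := by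
  obtain ⟨n, w, hw, rfl⟩ := hp
  obtain ⟨n', w', hw', rfl⟩ := hq
  exact ⟨n + n', w * w', hw.mul hw', by ring⟩

lemma HasQExp.sub {h : ℝ} {F G : ℍ → ℂ} {p q : PowerSeries AInt}
    (hF : HasQExp h F p) (hG : HasQExp h G q) : HasQExp h (F - G) (p - q) := by
  intro τ
  simpa [sub_mul] using (hF τ).sub (hG τ)

lemma HasQExp.one (h : ℝ) : HasQExp h 1 1 := by
  intro τ
  have := hasSum_single (f := fun m ↦ (((1 : PowerSeries AInt).coeff m : AInt) : ℂ) *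
    Periodic.qParam h τ ^ m) 0 (fun m hm ↦ by simp [PowerSeries.coeff_one, hm])
  simpa using this

lemma HasQExp.mul {h : ℝ} {F G : ℍ → ℂ} {p q : PowerSeries AInt}
    (hF : HasQExp h F p) (hG : HasQExp h G q) : HasQExp h (F * G) (p * q) := by
  intro τ
  have hf := (hF τ).summable.norm
  have hg := (hG τ).summable.norm
  have hs := (summable_norm_sum_mul_antidiagonal_of_summable_norm hf hg).of_norm
  have ht := tsum_mul_tsum_eq_tsum_sum_antidiagonal_of_summable_norm hf hg
  rw [(hF τ).tsum_eq, (hG τ).tsum_eq] at ht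
  have := hs.hasSum
  rw [← ht] at this
  refine this.congr_fun fun m ↦ ?_
  rw [PowerSeries.coeff_mul, AddSubmonoidClass.coe_finsetSum, Finset.sum_mul]
  refine Finset.sum_congr rfl fun kl hkl ↦ ?_
  rw [← Finset.HasAntidiagonal.mem_antidiagonal.mp hkl, pow_add]
  push_cast
  ring

lemma HasQExp.prod {ι : Type*} (s : Finset ι) {h : ℝ} {F : ι → ℍ → ℂ}
    (hF : ∀ i ∈ s, ∃ p, Nice p ∧ HasQExp h (F i) p) :
    ∃ p, Nice p ∧ HasQExp h (∏ i ∈ s, F i) p := by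
  classical
  induction s using Finset.induction_on with
  | empty => exact ⟨1, ⟨0, 1, isUnit_one, by simp⟩, by simpa using HasQExp.one h⟩
  | insert a s ha ih =>
    obtain ⟨p, hp, hp'⟩ := ih fun i hi ↦ hF i (Finset.mem_insert_of_mem hi)
    obtain ⟨q, hq, hq'⟩ := hF a (Finset.mem_insert_self _ _)
    exact ⟨q * p, hq.mul hp, by simpa [Finset.prod_insert ha] using hq'.mul hp'⟩

/-- Substitution `q ↦ ζ q ^ k` in an expansion, induced by a map `φ` of the upper half-plane. -/
lemma HasQExp.comp {h h' : ℝ} {F : ℍ → ℂ} {p : PowerSeries AInt} (hF : HasQExp h F p)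
    {φ : ℍ → ℍ} {ζ : AInt} {k : ℕ} (hk : k ≠ 0)
    (hφ : ∀ τ : ℍ, Periodic.qParam h (φ τ) = ζ * Periodic.qParam h' τ ^ k) :
    HasQExp h' (F ∘ φ) (PowerSeries.expand k hk (PowerSeries.rescale ζ p)) := by
  intro τ
  have inj : Function.Injective (fun m : ℕ ↦ k * m) := fun a b hab ↦ by simpa [hk] using hab
  rw [← inj.hasSum_iff]
  · convert hF (φ τ) using 2 with m
    · simp [PowerSeries.coeff_expand_mul, hφ, mul_pow, pow_mul]
      ring
    · rfl
  · intro x hx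
    rw [PowerSeries.coeff_expand_of_not_dvd]
    · simp
    · rintro ⟨c, rfl⟩
      exact hx ⟨c, rfl⟩

/-- The lowest coefficient of `F · (D ∘ φ) - (F ∘ φ) · D` at `i∞` is a unit, if `F` and `D` have
orders `0` and `1` at `i∞` with unit lowest coefficients. In `Q = exp (2πiτ / N)` the two products have orders
`k` and `N`, with unit lowest coefficients, so that for `k ≠ N` nothing can cancel. -/
lemma nice_combination {N k : ℕ} (hN : N ≠ 0) (hk : k ≠ 0) (hNk : k ≠ N) {F D : ℍ → ℂ}
    {e u : PowerSeries AInt} (he : IsUnit e) (hu : IsUnit u)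
    (hF : HasQExp 1 F e) (hD : HasQExp 1 D (PowerSeries.X * u))
    {φ : ℍ → ℍ} {ζ : AInt} (hζ : IsUnit ζ)
    (hφ : ∀ τ : ℍ, Periodic.qParam 1 (φ τ) = ζ * Periodic.qParam N τ ^ k) :
    ∃ p, Nice p ∧ HasQExp N (F * (D ∘ φ) - (F ∘ φ) * D) p := by
  -- `D` and `F` themselves are expansions in `Q ^ N`.
  have hid : ∀ τ : ℍ, Periodic.qParam 1 (id τ : ℍ) = (1 : AInt) * Periodic.qParam N τ ^ N := by
    intro τ
    have : (N : ℂ) ≠ 0 := by exact_mod_cast hN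
    simp only [Periodic.qParam, id, ← Complex.exp_nat_mul, OneMemClass.coe_one, one_mul]
    congr 1
    push_cast
    field_simp
  refine ⟨_, ?_, ((hF.comp hN hid).mul (hD.comp hk hφ)).sub ((hF.comp hk hφ).mul (hD.comp hN hid))⟩
  have hX (ξ : AInt) : PowerSeries.rescale ξ PowerSeries.X = PowerSeries.C ξ * PowerSeries.X :=
    PowerSeries.rescale_X ξ
  have hres (ξ : AInt) (p : PowerSeries AInt) :
      (PowerSeries.rescale ξ p).constantCoeff = p.constantCoeff := by
    rw [← PowerSeries.coeff_zero_eq_constantCoeff_apply, PowerSeries.coeff_rescale]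
    simp
  rw [PowerSeries.isUnit_iff_constantCoeff] at he hu
  simp only [map_mul, hX, PowerSeries.expand_X, map_one, one_mul, PowerSeries.expand_C]
  rcases lt_or_gt_of_ne hNk with hlt | hlt
  · obtain ⟨d, hd⟩ := Nat.exists_eq_add_of_lt hlt
    refine ⟨k, PowerSeries.expand N hN (PowerSeries.rescale 1 e) * (PowerSeries.C ζ *
      PowerSeries.expand k hk (PowerSeries.rescale ζ u)) - PowerSeries.X ^ (d + 1) *
      (PowerSeries.expand k hk (PowerSeries.rescale ζ e) *
       PowerSeries.expand N hN (PowerSeries.rescale 1 u)), ?_, ?_⟩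
    · rw [PowerSeries.isUnit_iff_constantCoeff]
      simp only [map_sub, map_mul, PowerSeries.constantCoeff_expand, hres, map_pow,
        PowerSeries.constantCoeff_X, PowerSeries.constantCoeff_C, zero_pow d.succ_ne_zero,
        zero_mul, sub_zero]
      exact he.mul (hζ.mul hu)
    · conv_lhs => enter [2,2,1]; rw [hd, add_assoc, pow_add]
      ring
  · obtain ⟨d, hd⟩ := Nat.exists_eq_add_of_lt hlt
    refine ⟨N, PowerSeries.X ^ (d + 1) * (PowerSeries.expand N hN (PowerSeries.rescale 1 e) *
      (PowerSeries.C ζ * PowerSeries.expand k hk (PowerSeries.rescale ζ u))) -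
      (PowerSeries.expand k hk (PowerSeries.rescale ζ e) *
       PowerSeries.expand N hN (PowerSeries.rescale 1 u)), ?_, ?_⟩
    · rw [PowerSeries.isUnit_iff_constantCoeff]
      simp only [map_sub, map_mul, PowerSeries.constantCoeff_expand, hres, map_pow,
        PowerSeries.constantCoeff_X, PowerSeries.constantCoeff_C, zero_pow d.succ_ne_zero,
        zero_mul, zero_sub]
      exact (he.mul hu).neg
    · conv_lhs => enter [1,2,1,2]; rw [hd, add_assoc, pow_add]
      ring

/-! ### Integrality of the expansions of `E₄³` and `Δ` -/

/-- The `q`-expansion of `f` at level one has algebraic integer coefficients, given by `p`. -/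
def IntExp (f : ℍ → ℂ) (p : PowerSeries AInt) : Prop :=
  qExpansion 1 f = p.map (algebraMap AInt ℂ)

/-- The congruence making `(E₄³ - E₆²) / 1728` have integral coefficients. -/
lemma five_sigma_add_seven_sigma (n : ℕ) :
    (12 : ℤ) ∣ 5 * ArithmeticFunction.sigma 3 n + 7 * ArithmeticFunction.sigma 5 n := by
  have key : ∀ d : ZMod 12, 5 * d ^ 3 + 7 * d ^ 5 = 0 := by decide
  simp only [ArithmeticFunction.sigma_apply, Nat.cast_sum, Finset.mul_sum,
    ← Finset.sum_add_distrib]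
  refine Finset.dvd_sum fun d _ ↦ ?_
  have := key d
  exact (ZMod.intCast_zmod_eq_zero_iff_dvd _ 12).mp (by push_cast; exact this)

/-- The series `∑ σ₃(n) qⁿ`, so that `E₄ = 1 + 240 A3`. -/
noncomputable def A3 : PowerSeries ℤ := PowerSeries.mk fun n ↦ (ArithmeticFunction.sigma 3 n : ℤ)

/-- The series `∑ σ₅(n) qⁿ`, so that `E₆ = 1 - 504 A5`. -/
noncomputable def A5 : PowerSeries ℤ := PowerSeries.mk fun n ↦ (ArithmeticFunction.sigma 5 n : ℤ)

lemma E4_exp : qExpansion 1 E₄ = (1 + PowerSeries.C 240 * A3).map (algebraMap ℤ ℂ) := by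
  ext m
  rw [EisensteinSeries.E_qExpansion_coeff _ ⟨2, rfl⟩, show bernoulli 4 = -1 / 30 by decide +kernel]
  simp only [PowerSeries.coeff_map, map_add, PowerSeries.coeff_C_mul, PowerSeries.coeff_one,
    A3, PowerSeries.coeff_mk]
  split_ifs with hm
  · simp [hm]
  · norm_num

lemma E6_exp : qExpansion 1 E₆ = (1 - PowerSeries.C 504 * A5).map (algebraMap ℤ ℂ) := by
  ext m
  rw [EisensteinSeries.E_qExpansion_coeff _ ⟨3, rfl⟩, show bernoulli 6 = 1 / 42 by decide +kernel]
  simp only [PowerSeries.coeff_map, map_sub, PowerSeries.coeff_C_mul, PowerSeries.coeff_one,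
    A5, PowerSeries.coeff_mk]
  split_ifs with hm
  · simp [hm]
  · norm_num

/-- The discriminant form has integral coefficients, proved from `1728 Δ = E₄³ - E₆²` by exhibiting
the quotient by `1728`. -/
lemma exists_disc_exp_int :
    ∃ D : PowerSeries ℤ, qExpansion 1 discriminant = D.map (algebraMap ℤ ℂ) := by
  choose c hc using five_sigma_add_seven_sigma
  have hC : 5 * A3 + 7 * A5 = 12 * PowerSeries.mk c := by
    ext n
    simpa only [A3, A5, ← map_ofNat (PowerSeries.C (R := ℤ)), map_add, PowerSeries.coeff_C_mul,
      PowerSeries.coeff_mk] using hc n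
  refine ⟨PowerSeries.mk c + 100 * A3 ^ 2 + 8000 * A3 ^ 3 - 147 * A5 ^ 2, ?_⟩
  have key : (1728 : PowerSeries ℤ) * (PowerSeries.mk c + 100 * A3 ^ 2 + 8000 * A3 ^ 3 -
      147 * A5 ^ 2) = (1 + PowerSeries.C 240 * A3) ^ 3 - (1 - PowerSeries.C 504 * A5) ^ 2 := by
    rw [map_ofNat, map_ofNat]
    linear_combination -144 * hC
  have h2 : ((1728 : ℂ) • discriminant : ℍ → ℂ) = ⇑(E₄.pow 3) - ⇑(E₆.pow 2) := by
    ext z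
    simp only [Pi.smul_apply, Pi.sub_apply, ModularForm.coe_pow, Pi.pow_apply, smul_eq_mul,
      discriminant_eq_E₄_cube_sub_E₆_sq z]
    ring
  have h3 : (1728 : ℂ) • qExpansion 1 discriminant =
      qExpansion 1 E₄ ^ 3 - qExpansion 1 E₆ ^ 2 := by
    rw [← CuspForm.coe_discriminant, ← ModularForm.qExpansion_smul one_pos one_mem_strictPeriods_SL,
      CuspForm.coe_discriminant, h2,
      ModularForm.qExpansion_sub one_pos one_mem_strictPeriods_SL,
      ModularForm.qExpansion_pow one_pos one_mem_strictPeriods_SL,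
      ModularForm.qExpansion_pow one_pos one_mem_strictPeriods_SL]
  rw [E4_exp, E6_exp, ← map_pow, ← map_pow, ← map_sub, ← key, map_mul] at h3
  have h4 : (PowerSeries.map (algebraMap ℤ ℂ)) 1728 = PowerSeries.C 1728 := by
    rw [map_ofNat, map_ofNat]
  rw [h4, ← PowerSeries.smul_eq_C_mul] at h3
  exact smul_right_injective _ (by norm_num) h3

/-- `E₄³` has integral expansion with constant term `1`. -/
lemma exists_E4_cube_exp : ∃ e : PowerSeries AInt, e.constantCoeff = 1 ∧ IntExp (E₄.pow 3) e := by
  refine ⟨((1 + PowerSeries.C 240 * A3) ^ 3).map (algebraMap ℤ AInt), ?_, ?_⟩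
  · have h0 : A3.constantCoeff = 0 := by
      simp [A3, ← PowerSeries.coeff_zero_eq_constantCoeff_apply]
    have h1 : ((1 + PowerSeries.C 240 * A3) ^ 3).constantCoeff = 1 := by
      simp only [map_pow, map_add, map_mul, h0]
      simp
    rw [← PowerSeries.coeff_zero_eq_constantCoeff_apply, PowerSeries.coeff_map,
      PowerSeries.coeff_zero_eq_constantCoeff_apply, h1, map_one]
  · rw [IntExp, ModularForm.qExpansion_pow one_pos one_mem_strictPeriods_SL, E4_exp, ← map_pow,
      ← RingHom.comp_apply, ← PowerSeries.map_comp, ← IsScalarTower.algebraMap_eq]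

/-- The discriminant form is `q` times a unit series. -/
lemma exists_disc_exp :
    ∃ u : PowerSeries AInt, IsUnit u ∧ IntExp discriminant (PowerSeries.X * u) := by
  obtain ⟨D, hD⟩ := exists_disc_exp_int
  have h0 : D.constantCoeff = 0 := by
    have := CuspFormClass.qExpansion_coeff_zero CuspForm.discriminant one_pos one_mem_strictPeriods_SL
    rw [CuspForm.coe_discriminant, hD] at this
    simpa using this
  have h1 : D.coeff 1 = 1 := by
    have := discriminant_qExpansion_coeff_one
    rw [hD] at this
    simpa using this
  obtain ⟨v, rfl⟩ := PowerSeries.X_dvd_iff.mpr h0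
  have hv : v.constantCoeff = 1 := by
    rw [show 1 = 0 + 1 from rfl, PowerSeries.coeff_succ_X_mul] at h1
    simpa using h1
  refine ⟨v.map (algebraMap ℤ AInt), ?_, ?_⟩
  · exact (PowerSeries.isUnit_iff_constantCoeff.mpr (by simp [hv])).map _
  · rw [IntExp, hD, map_mul, map_mul, PowerSeries.map_X, PowerSeries.map_X, ← RingHom.comp_apply,
      ← PowerSeries.map_comp, ← IsScalarTower.algebraMap_eq]

/-! ### The `q`-expansion principle -/

/-- A form vanishing at `i∞` is divisible by the discriminant form, and the quotient again has algebraic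
integer coefficients since `Δ` is `q` times a unit series. -/
lemma exists_div_disc {k : ℤ} (f : ModularForm 𝒮ℒ k) {r : PowerSeries AInt}
    (hf : IntExp f (PowerSeries.X * r)) {u : (PowerSeries AInt)ˣ}
    (hu : IntExp discriminant (PowerSeries.X * (u : PowerSeries AInt))) :
    ∃ g : ModularForm 𝒮ℒ (k - 12), (∀ τ, f τ = discriminant τ * g τ) ∧
      IntExp g ((↑u⁻¹ : PowerSeries AInt) * r) := by
  have h0 : (qExpansion 1 f).coeff 0 = 0 := by rw [hf]; simp
  refine ⟨CuspForm.discriminantEquiv (f.toCuspForm h0), fun τ ↦ ?_, ?_⟩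
  · rw [discriminant_mul_discriminantEquiv_apply, toCuspForm_apply]
  · have h := qExpansion_eq_qExpansion_discriminant_mul f h0
    rw [hf, hu, map_mul, map_mul, PowerSeries.map_X, mul_assoc] at h
    have h' := mul_left_cancel₀ PowerSeries.X_ne_zero h
    rw [IntExp, map_mul, h', ← mul_assoc, ← map_mul, Units.inv_mul, map_one, one_mul]

lemma intExp_E4_pow {e : PowerSeries AInt} (he : IntExp (E₄.pow 3) e) (m : ℕ) :
    IntExp ((E₄.pow 3).pow m) (e ^ m) := by
  rw [IntExp, ModularForm.qExpansion_pow one_pos one_mem_strictPeriods_SL, he, map_pow]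

/-- Subtracting a multiple of `E₄ ^ (3m)` kills the constant term, after which `Δ` divides. -/
lemma exists_sub_E4_pow (m : ℕ) (f : ModularForm 𝒮ℒ (12 * (m : ℤ))) {p : PowerSeries AInt}
    (hf : IntExp f p) : ∃ (g : ModularForm 𝒮ℒ (12 * (m : ℤ) - 12)) (s : PowerSeries AInt),
      IntExp g s ∧
      ∀ τ, f τ = (p.constantCoeff : ℂ) * (E₄ τ ^ 3) ^ m + discriminant τ * g τ := by
  obtain ⟨e, he0, he⟩ := exists_E4_cube_exp
  obtain ⟨_, ⟨u, rfl⟩, hu⟩ := exists_disc_exp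
  set c : AInt := p.constantCoeff with hc
  let E : ModularForm 𝒮ℒ (12 * (m : ℤ)) :=
    ModularForm.mcast (by push_cast; ring) ((E₄.pow 3).pow m) rfl
  have hE : IntExp E (e ^ m) := intExp_E4_pow he m
  have hEτ (τ : ℍ) : E τ = (E₄ τ ^ 3) ^ m := by
    change ((E₄.pow 3).pow m) τ = _
    simp only [ModularForm.coe_pow, Pi.pow_apply]
  obtain ⟨r, hr⟩ : PowerSeries.X ∣ p - PowerSeries.C c * e ^ m := by
    rw [PowerSeries.X_dvd_iff]
    simp [he0, hc]
  have hsub : IntExp (f - (c : ℂ) • E : ModularForm 𝒮ℒ (12 * (m : ℤ))) (PowerSeries.X * r) := by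
    rw [IntExp, ← hr, FunLike.coe_sub,
      ModularForm.qExpansion_sub one_pos one_mem_strictPeriods_SL, FunLike.coe_smul,
      ModularForm.qExpansion_smul one_pos one_mem_strictPeriods_SL, hf, hE, map_sub, map_mul,
      PowerSeries.map_C, PowerSeries.smul_eq_C_mul]
    rfl
  obtain ⟨g, hg, hgs⟩ := exists_div_disc _ hsub hu
  refine ⟨g, _, hgs, fun τ ↦ ?_⟩
  rw [← hg, ← hEτ]
  simp

/-- The `q`-expansion principle: `f / Δ ^ m` is a polynomial in `j = E₄³ / Δ` with algebraic integer
coefficients, in which `j ^ m` has the constant term of `f` as coefficient. -/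
lemma exists_polynomial (m : ℕ) (f : ModularForm 𝒮ℒ (12 * (m : ℤ))) {p : PowerSeries AInt}
    (hf : IntExp f p) : ∃ P : Polynomial AInt, P.natDegree ≤ m ∧ P.coeff m = p.constantCoeff ∧
      ∀ τ, f τ = discriminant τ ^ m * Polynomial.aeval (E₄ τ ^ 3 / discriminant τ) P := by
  induction m generalizing p with
  | zero =>
    obtain ⟨g, s, -, h⟩ := exists_sub_E4_pow 0 f hf
    have hg : ⇑g = 0 := ModularFormClass.levelOne_neg_weight_eq_zero (by simp) g
    refine ⟨Polynomial.C p.constantCoeff, by simp, by simp, fun τ ↦ ?_⟩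
    rw [h τ, hg]
    simp
  | succ m ih =>
    obtain ⟨g, s, hs, h⟩ := exists_sub_E4_pow (m + 1) f hf
    obtain ⟨P, hPd, -, hP⟩ := ih (ModularForm.mcast (by push_cast; ring) g rfl) (p := s) hs
    refine ⟨Polynomial.C p.constantCoeff * Polynomial.X ^ (m + 1) + P, ?_, ?_, fun τ ↦ ?_⟩
    · exact (Polynomial.natDegree_add_le _ _).trans
        (max_le (Polynomial.natDegree_C_mul_X_pow_le _ _) (by omega))
    · rw [Polynomial.coeff_add, Polynomial.coeff_eq_zero_of_natDegree_lt (p := P) (by omega)]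
      simp
    · have hgP : g τ = discriminant τ ^ m *
          Polynomial.aeval (E₄ τ ^ 3 / discriminant τ) P := hP τ
      have hC : algebraMap AInt ℂ p.constantCoeff = (p.constantCoeff : ℂ) := rfl
      have hΔ := discriminant_ne_zero τ
      rw [h τ, hgP, map_add, map_mul, map_pow, Polynomial.aeval_X, Polynomial.aeval_C, hC]
      have hj : (E₄ τ ^ 3) ^ (m + 1) =
          discriminant τ ^ (m + 1) * (E₄ τ ^ 3 / discriminant τ) ^ (m + 1) := by
        rw [← mul_pow, mul_div_cancel₀ _ hΔ]
      rw [hj]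
      ring

/-- At a zero of a form of level one whose expansion has a unit lowest coefficient, the value of
`E₄³ / Δ` is an algebraic integer: dividing by `Δ` until the constant term is a unit leaves a
polynomial in `E₄³ / Δ` with unit leading coefficient. -/
lemma isIntegral_of_nice (m : ℕ) (f : ModularForm 𝒮ℒ (12 * (m : ℤ))) {p : PowerSeries AInt}
    (hf : IntExp f p) (hp : Nice p) {θ : ℍ} (hθ : f θ = 0) :
    IsIntegral ℤ (E₄ θ ^ 3 / discriminant θ) := by
  obtain ⟨_, ⟨u, rfl⟩, hu⟩ := exists_disc_exp
  obtain ⟨n, w, hw, rfl⟩ := hp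
  induction n generalizing m w with
  | zero =>
    obtain ⟨P, hPd, hPc, hP⟩ := exists_polynomial m f hf
    obtain ⟨v, hv⟩ : IsUnit (P.coeff m) := by
      rw [hPc, pow_zero, one_mul]
      exact PowerSeries.isUnit_iff_constantCoeff.mp hw
    have h0 : Polynomial.aeval (E₄ θ ^ 3 / discriminant θ) P = 0 := by
      have := hP θ
      rw [hθ, eq_comm, mul_eq_zero] at this
      exact this.resolve_left (pow_ne_zero _ (discriminant_ne_zero θ))
    have hint : IsIntegral AInt (E₄ θ ^ 3 / discriminant θ) := by
      refine ⟨Polynomial.C (↑v⁻¹ : AInt) * P, ?_, ?_⟩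
      · refine Polynomial.monic_of_natDegree_le_of_coeff_eq_one m
          ((Polynomial.natDegree_C_mul_le _ _).trans hPd) ?_
        rw [Polynomial.coeff_C_mul, ← hv, Units.inv_mul]
      · rw [← Polynomial.aeval_def, map_mul, h0, mul_zero]
    exact isIntegral_trans _ hint
  | succ n ih =>
    rw [pow_succ', mul_assoc] at hf
    obtain ⟨g, hg, hgs⟩ := exists_div_disc f hf hu
    rcases m with - | m
    -- In weight zero the quotient has negative weight, so `f = 0`, against the unit coefficient.
    · have hg0 : ⇑g = 0 := ModularFormClass.levelOne_neg_weight_eq_zero (by simp) g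
      have h1 : (PowerSeries.X ^ n * w).map (algebraMap AInt ℂ) = 0 := by
        have hz : ⇑f = 0 := by
          ext τ
          rw [hg, hg0]
          simp
        rw [hz, IntExp, qExpansion_zero, map_mul, PowerSeries.map_X] at hf
        exact (mul_eq_zero.mp hf.symm).resolve_left PowerSeries.X_ne_zero
      rw [map_mul, map_pow, PowerSeries.map_X] at h1
      exact absurd h1 (mul_ne_zero (pow_ne_zero _ PowerSeries.X_ne_zero) (hw.map _).ne_zero)
    · have e : (↑u⁻¹ : PowerSeries AInt) * (PowerSeries.X ^ n * w) =
        PowerSeries.X ^ n * ((↑u⁻¹ : PowerSeries AInt) * w) := by ring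
      rw [e] at hgs
      refine ih m (ModularForm.mcast (by push_cast; ring) g rfl) ?_ _ (u⁻¹.isUnit.mul hw) hgs
      have := hg θ
      rw [hθ, eq_comm, mul_eq_zero] at this
      exact this.resolve_left (discriminant_ne_zero θ)

/-! ### Descent from `Q = exp (2πiτ / N)` to `q` -/

/-- For a form of level one, an expansion in `Q = exp (2πiτ / N)` is in fact one in `q = Q ^ N`, so
integrality and the unit lowest coefficient descend. -/
lemma HasQExp.intExp_of_nice {k : ℤ} {N : ℕ} (hN : N ≠ 0) (f : ModularForm 𝒮ℒ k)
    {p : PowerSeries AInt} (hp : Nice p) (hf : HasQExp N f p) :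
    ∃ c, Nice c ∧ IntExp f c := by
  have hN0 : (0 : ℝ) < N := by exact_mod_cast Nat.pos_of_ne_zero hN
  have hmem : (N : ℝ) ∈ (𝒮ℒ : Subgroup (GL (Fin 2) ℝ)).strictPeriods := by
    simpa using nsmul_mem one_mem_strictPeriods_SL N
  have hq (τ : ℍ) : Periodic.qParam 1 τ = Periodic.qParam N τ ^ N := by
    have : (N : ℂ) ≠ 0 := by exact_mod_cast hN
    simp only [Periodic.qParam, ← Complex.exp_nat_mul]
    congr 1
    push_cast
    field_simp
  have inj : Function.Injective (fun m : ℕ ↦ N * m) := fun a b hab ↦ by simpa [hN] using hab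
  set c := qExpansion 1 f with hc
  have h1 (m : ℕ) : (PowerSeries.expand N hN c).coeff m = ((p.coeff m : AInt) : ℂ) := by
    rw [ModularFormClass.qExpansion_coeff_unique hN0 hmem (f := f)
      (c := fun m ↦ ((p.coeff m : AInt) : ℂ)) (fun τ ↦ by simpa using hf τ) m]
    refine ModularFormClass.qExpansion_coeff_unique hN0 hmem (f := f)
      (c := fun m ↦ (PowerSeries.expand N hN c).coeff m) (fun τ ↦ ?_) m
    rw [← inj.hasSum_iff]
    · convert ModularForm.hasSum_qExpansion f one_pos one_mem_strictPeriods_SL τ using 2 with m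
      simp [PowerSeries.coeff_expand_mul, hq, pow_mul, hc]
    · intro x hx
      rw [PowerSeries.coeff_expand_of_not_dvd]
      · simp
      · rintro ⟨c, rfl⟩
        exact hx ⟨c, rfl⟩
  obtain ⟨n, w, hw, rfl⟩ := hp
  have hw0 : IsUnit (w.constantCoeff) := PowerSeries.isUnit_iff_constantCoeff.mp hw
  obtain ⟨r, rfl⟩ : N ∣ n := by
    by_contra hdvd
    have := h1 n
    rw [PowerSeries.coeff_expand_of_not_dvd _ _ _ hdvd] at this
    have h2 : (PowerSeries.X ^ n * w).coeff n = w.constantCoeff := by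
      simp [PowerSeries.coeff_X_pow_mul']
    rw [h2] at this
    exact hw0.ne_zero (by exact_mod_cast this.symm)
  refine ⟨PowerSeries.X ^ r * PowerSeries.mk fun m ↦ w.coeff (N * m), ⟨r, _, ?_, rfl⟩, ?_⟩
  · rw [PowerSeries.isUnit_iff_constantCoeff, ← PowerSeries.coeff_zero_eq_constantCoeff_apply]
    simpa using hw0
  · rw [IntExp, ← hc]
    ext m
    rw [← PowerSeries.coeff_expand_mul N hN c m, h1, PowerSeries.coeff_map,
      PowerSeries.coeff_X_pow_mul', PowerSeries.coeff_X_pow_mul']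
    have hle : N * r ≤ N * m ↔ r ≤ m := Nat.mul_le_mul_left_iff (Nat.pos_of_ne_zero hN)
    simp only [hle, PowerSeries.coeff_mk, Nat.mul_sub]
    rfl

lemma HasQExp.isBoundedAtImInfty {N : ℕ} (hN : N ≠ 0) {F : ℍ → ℂ} {p : PowerSeries AInt}
    (hF : HasQExp N F p) : IsBoundedAtImInfty F := by
  rw [isBoundedAtImInfty_iff]
  refine ⟨∑' m : ℕ, ‖((p.coeff m : AInt) : ℂ) * Periodic.qParam N (I : ℍ) ^ m‖, 1, fun τ hτ ↦ ?_⟩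
  have hs := (hF I).summable.norm
  rw [← (hF τ).tsum_eq]
  have hle (m : ℕ) : ‖((p.coeff m : AInt) : ℂ) * Periodic.qParam N τ ^ m‖ ≤
      ‖((p.coeff m : AInt) : ℂ) * Periodic.qParam N (I : ℍ) ^ m‖ := by
    simp only [norm_mul, norm_pow, Periodic.norm_qParam]
    have h1 : -2 * π * (τ : ℂ).im ≤ -2 * π * ((I : ℍ) : ℂ).im := by
      have : (1 : ℝ) ≤ (τ : ℂ).im := hτ
      simp only [coe_I, Complex.I_im]
      nlinarith [Real.pi_pos]
    gcongr
  exact (norm_tsum_le_tsum_norm (hF τ).summable.norm).trans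
    ((hF τ).summable.norm.tsum_le_tsum hle hs)

/-! ### Matrices of determinant `N` and the functions `K_A` -/

/-- Integral `2 × 2` matrices of determinant `N`. -/
abbrev Mat (N : ℕ) := FixedDetMatrix (Fin 2) ℤ (N : ℤ)

/-- The classes of matrices of determinant `N` under left multiplication by `SL(2, ℤ)`. -/
abbrev Orbits (N : ℕ) := MulAction.orbitRel.Quotient SL(2, ℤ) (Mat N)

variable {N : ℕ}

/-- A matrix of determinant `N ≠ 0`, viewed in `GL(2, ℝ)`. -/
noncomputable def toGL [NeZero N] (A : Mat N) : GL (Fin 2) ℝ :=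
  .mkOfDetNeZero (A.1.map (Int.cast : ℤ → ℝ)) (by
    have : (A.1.map (Int.cast : ℤ → ℝ)).det = N := by
      simpa [A.2] using (Int.castRingHom ℝ).map_det A.1 |>.symm
    rw [this]
    exact_mod_cast NeZero.ne N)

@[simp] lemma toGL_apply [NeZero N] (A : Mat N) (i j : Fin 2) : toGL A i j = A.1 i j := rfl

lemma toGL_det [NeZero N] (A : Mat N) : (toGL A).det.val = N := by
  change (A.1.map (Int.cast : ℤ → ℝ)).det = N
  simpa [A.2] using (Int.castRingHom ℝ).map_det A.1 |>.symm

lemma toGL_smul [NeZero N] (γ : SL(2, ℤ)) (A : Mat N) :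
    toGL (γ • A) = (γ : GL (Fin 2) ℝ) * toGL A := by
  ext i j
  simp [FixedDetMatrices.smul_coe, Matrix.mul_apply]

/-- Right multiplication of a matrix of determinant `N` by an element of `SL(2, ℤ)`. -/
def rmul (γ : SL(2, ℤ)) (A : Mat N) : Mat N := ⟨A.1 * γ, by simp [A.2]⟩

lemma rmul_coe (γ : SL(2, ℤ)) (A : Mat N) : (rmul γ A).1 = A.1 * γ := rfl

lemma toGL_rmul [NeZero N] (γ : SL(2, ℤ)) (A : Mat N) :
    toGL (rmul γ A) = toGL A * (γ : GL (Fin 2) ℝ) := by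
  ext i j
  simp [rmul_coe, Matrix.mul_apply]

/-- Each class contains an upper triangular matrix, among a finite set of representatives. -/
lemma exists_triangular [NeZero N] (c : Orbits N) :
    ∃ A : Mat N, (Quotient.mk _ A : Orbits N) = c ∧ A.1 1 0 = 0 ∧ 0 < A.1 0 0 ∧
      A ∈ FixedDetMatrices.reps (N : ℤ) := by
  obtain ⟨A, rfl⟩ := Quotient.exists_rep c
  have hN : (N : ℤ) ≠ 0 := by exact_mod_cast NeZero.ne N
  induction A using FixedDetMatrices.induction_on hN with
  | h0 A h1 h2 h3 h4 => exact ⟨A, rfl, h1, h2, h1, h2, h3, h4⟩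
  | hS B hB =>
    obtain ⟨A, hA, h⟩ := hB
    exact ⟨A, hA.trans (Quotient.sound ⟨ModularGroup.S⁻¹, by simp⟩), h⟩
  | hT B hB =>
    obtain ⟨A, hA, h⟩ := hB
    exact ⟨A, hA.trans (Quotient.sound ⟨ModularGroup.T⁻¹, by simp⟩), h⟩

noncomputable instance [NeZero N] : Fintype (Orbits N) := by
  classical
  exact Fintype.ofSurjective
    (fun A : FixedDetMatrices.reps (N : ℤ) ↦ (Quotient.mk _ A.1 : Orbits N)) fun c ↦ by
      obtain ⟨A, hA, -, -, h⟩ := exists_triangular c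
      exact ⟨⟨A, h⟩, hA⟩

/-- The permutation of the classes induced by right multiplication. -/
def rmulOrbits (γ : SL(2, ℤ)) : Orbits N → Orbits N :=
  Quotient.map (rmul γ) (by
    rintro A B ⟨δ, rfl⟩
    refine ⟨δ, ?_⟩
    apply FixedDetMatrices.ext'
    change (δ • rmul γ B).1 = (rmul γ (δ • B)).1
    simp only [rmul_coe, FixedDetMatrices.smul_coe, Matrix.mul_assoc])

lemma rmulOrbits_bijective (γ : SL(2, ℤ)) : Function.Bijective (rmulOrbits (N := N) γ) := by
  have key (γ δ : SL(2, ℤ)) (h : γ * δ = 1) :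
      LeftInverse (rmulOrbits (N := N) δ) (rmulOrbits γ) := by
    rintro ⟨A⟩
    change (Quotient.mk _ _ : Orbits N) = Quotient.mk _ _
    congr 1
    apply FixedDetMatrices.ext'
    change A.1 * γ.1 * δ.1 = A.1
    rw [Matrix.mul_assoc, ← Matrix.SpecialLinearGroup.coe_mul, h]
    simp
  exact ⟨(key γ γ⁻¹ (by simp)).injective, (key γ⁻¹ γ (by simp)).surjective⟩

/-- For `F` and `D` of weight `12`, the weight `24` function `F · D|A - F|A · D`. It vanishes where
`F / D` and `(F / D) ∘ A` agree, and so at the fixed points of `A`. -/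
noncomputable def cross [NeZero N] (F D : ℍ → ℂ) (A : Mat N) : ℍ → ℂ :=
  F * (D ∣[(12 : ℤ)] toGL A) - (F ∣[(12 : ℤ)] toGL A) * D

/-- `cross F D A` depends only on the class of `A`. -/
lemma cross_smul [NeZero N] {F D : ℍ → ℂ} (hF : ∀ γ : SL(2, ℤ), F ∣[(12 : ℤ)] γ = F)
    (hD : ∀ γ : SL(2, ℤ), D ∣[(12 : ℤ)] γ = D) (γ : SL(2, ℤ)) (A : Mat N) :
    cross F D (γ • A) = cross F D A := by
  simp only [SL_slash] at hF hD
  simp only [cross, toGL_smul, SlashAction.slash_mul, hF, hD]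

/-- `SL(2, ℤ)` permutes the functions `cross F D A` through right multiplication on `A`. -/
lemma cross_slash [NeZero N] {F D : ℍ → ℂ} (hF : ∀ γ : SL(2, ℤ), F ∣[(12 : ℤ)] γ = F)
    (hD : ∀ γ : SL(2, ℤ), D ∣[(12 : ℤ)] γ = D) (γ : SL(2, ℤ)) (A : Mat N) :
    cross F D A ∣[(24 : ℤ)] γ = cross F D (rmul γ A) := by
  rw [cross, cross, sub_eq_add_neg, SlashAction.add_slash, SlashAction.neg_slash, ← sub_eq_add_neg,
    show (24 : ℤ) = 12 + 12 by norm_num, mul_slash_SL2, mul_slash_SL2, hF, hD, toGL_rmul,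
    SlashAction.slash_mul, SlashAction.slash_mul]
  rfl

/-! ### Expansion of `K_A` at infinity -/

/-- For `A = (a, b; 0, d)` one has `q ∘ A = ζ Q ^ (a²)` with `Q = exp (2πiτ / N)` and `ζ` a `d`-th root
of unity. As `N` is not a square, `a² ≠ N`, and the scaling by `r` removes the automorphy factor, so
the expansion of `cross F D A` in `Q` has, up to `r`, a unit lowest coefficient. -/
lemma cross_expansion [NeZero N] (hsq : ¬ IsSquare N) {F D : ℍ → ℂ} {e u : PowerSeries AInt}
    (he : IsUnit e) (hu : IsUnit u) (hF : HasQExp 1 F e) (hD : HasQExp 1 D (PowerSeries.X * u))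
    (A : Mat N) (h10 : A.1 1 0 = 0) (h00 : 0 < A.1 0 0) :
    ∃ (r : ℂ) (p : PowerSeries AInt), r ≠ 0 ∧ Nice p ∧ HasQExp N (r • cross F D A) p := by
  have hN : (0 : ℝ) < N := by exact_mod_cast Nat.pos_of_ne_zero (NeZero.ne N)
  obtain ⟨a, ha⟩ := Int.eq_ofNat_of_zero_le h00.le
  have hdet : A.1 0 0 * A.1 1 1 = N := by
    have := A.2
    rwa [Matrix.det_fin_two, h10, mul_zero, sub_zero] at this
  have hd0 : 0 < A.1 1 1 := by
    have : 0 < A.1 0 0 * A.1 1 1 := by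
      rw [hdet]
      exact_mod_cast Nat.pos_of_ne_zero (NeZero.ne N)
    exact (pos_iff_pos_of_mul_pos this).mp h00
  obtain ⟨d, hd⟩ := Int.eq_ofNat_of_zero_le hd0.le
  set b := A.1 0 1 with hb
  have had : a * d = N := by
    rw [ha, hd] at hdet
    exact_mod_cast hdet
  have ha0 : a ≠ 0 := by rintro rfl; simp_all
  have hd0' : d ≠ 0 := by rintro rfl; simp_all
  have haC : (a : ℂ) ≠ 0 := by exact_mod_cast ha0
  have hdC : (d : ℂ) ≠ 0 := by exact_mod_cast hd0'
  have hNC : (N : ℂ) = a * d := by exact_mod_cast had.symm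
  have hden (τ : ℍ) : denom (toGL A) τ = d := by
    simp [denom, h10, hd]
  have hσ : 0 < (toGL A).det.val := by rwa [toGL_det]
  have hφ (τ : ℍ) : ((toGL A • τ : ℍ) : ℂ) = (a * τ + b) / d := by
    rw [coe_smul_of_det_pos hσ, hden]
    simp [num, ha, hb]
  have hslash (f : ℍ → ℂ) : f ∣[(12 : ℤ)] toGL A =
      ((N : ℂ) ^ 11 * (d : ℂ) ^ (-12 : ℤ)) • (f ∘ (toGL A • ·)) := by
    ext τ
    rw [slash_apply, hden, toGL_det, σ, if_pos hσ]
    simp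
    ring
  set ζ₀ : ℂ := Complex.exp (2 * π * Complex.I * (b / d)) with hζ₀
  have hpow : ζ₀ ^ d = 1 := by
    rw [hζ₀, ← Complex.exp_nat_mul, Complex.exp_eq_one_iff]
    refine ⟨b, ?_⟩
    field_simp
  have hζint : IsIntegral ℤ ζ₀ :=
    IsIntegral.of_pow (Nat.pos_of_ne_zero hd0') (by rw [hpow]; exact isIntegral_one)
  let ζ : AInt := ⟨ζ₀, hζint⟩
  have hζ : IsUnit ζ := IsUnit.of_pow_eq_one (n := d) (Subtype.ext hpow) hd0'
  have hq (τ : ℍ) : Periodic.qParam 1 (toGL A • τ : ℍ) = ζ * Periodic.qParam N τ ^ (a ^ 2) := by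
    change _ = ζ₀ * _
    rw [hφ, hζ₀]
    simp only [Periodic.qParam, ← Complex.exp_nat_mul, ← Complex.exp_add]
    congr 1
    push_cast
    rw [hNC]
    field_simp
    ring
  obtain ⟨p, hp, hpF⟩ := nice_combination (NeZero.ne N) (k := a ^ 2) (pow_ne_zero _ ha0)
    (fun h ↦ hsq ⟨a, by rw [← h, sq]⟩) he hu hF hD hζ hq
  have hc : ((N : ℂ) ^ 11 * (d : ℂ) ^ (-12 : ℤ)) ≠ 0 :=
    mul_ne_zero (pow_ne_zero _ (by exact_mod_cast NeZero.ne N)) (zpow_ne_zero _ hdC)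
  -- The scalar clears the constant `N ^ 11 / d ^ 12` common to both slashed functions.
  refine ⟨((N : ℂ) ^ 11 * (d : ℂ) ^ (-12 : ℤ))⁻¹, p, inv_ne_zero hc, hp, ?_⟩
  convert hpF using 1
  rw [cross, hslash, hslash, mul_smul_comm, smul_mul_assoc, ← smul_sub, smul_smul,
    inv_mul_cancel₀ hc, one_smul]

/-! ### The product over all classes -/

lemma IntExp.hasQExp {F : Type*} [FunLike F ℍ ℂ] {k : ℤ} [ModularFormClass F 𝒮ℒ k] (f : F)
    {p : PowerSeries AInt} (hf : IntExp f p) : HasQExp 1 f p := by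
  intro τ
  have := ModularForm.hasSum_qExpansion f one_pos one_mem_strictPeriods_SL τ
  rw [hf] at this
  simpa using this

lemma slash_SL {F : Type*} [FunLike F ℍ ℂ] {k : ℤ} [SlashInvariantFormClass F 𝒮ℒ k] (f : F)
    (γ : SL(2, ℤ)) : ⇑f ∣[k] γ = ⇑f :=
  SlashInvariantForm.slash_action_eqn f _ ⟨γ, rfl⟩

/-- `j` is integral at a fixed point of an integral matrix of non-square determinant `N`: the product
of `cross E₄³ Δ B` over all classes of matrices `B` of determinant `N` is a form of level one whose
expansion has a unit lowest coefficient up to scaling, and it vanishes at the fixed point. -/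
lemma isIntegral_of_fixed [NeZero N] (hsq : ¬ IsSquare N) (A : Mat N) {θ : ℍ}
    (hθ : toGL A • θ = θ) : IsIntegral ℤ (E₄ θ ^ 3 / discriminant θ) := by
  obtain ⟨e, he0, he⟩ := exists_E4_cube_exp
  obtain ⟨u, hu, huΔ⟩ := exists_disc_exp
  have heu : IsUnit e := PowerSeries.isUnit_iff_constantCoeff.mpr (by simp [he0])
  let E : ModularForm 𝒮ℒ 12 := ModularForm.mcast (by norm_num) (E₄.pow 3) rfl
  have hE : HasQExp 1 E e := IntExp.hasQExp (E₄.pow 3) he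
  have hD : HasQExp 1 CuspForm.discriminant (PowerSeries.X * u) :=
    IntExp.hasQExp CuspForm.discriminant huΔ
  have hEs : ∀ γ : SL(2, ℤ), ⇑E ∣[(12 : ℤ)] γ = ⇑E := slash_SL E
  have hDs : ∀ γ : SL(2, ℤ), ⇑CuspForm.discriminant ∣[(12 : ℤ)] γ = ⇑CuspForm.discriminant :=
    slash_SL CuspForm.discriminant
  let K : Orbits N → ℍ → ℂ := Quotient.lift (cross E CuspForm.discriminant) (by
    rintro B C ⟨γ, rfl⟩
    exact cross_smul hEs hDs γ C)
  have hK (B : Mat N) : K (Quotient.mk _ B) = cross E CuspForm.discriminant B := rfl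
  have hKexp (c : Orbits N) : ∃ (r : ℂ) (p : PowerSeries AInt),
      r ≠ 0 ∧ Nice p ∧ HasQExp N (r • K c) p := by
    obtain ⟨B, rfl, h10, h00, -⟩ := exists_triangular c
    exact cross_expansion hsq heu hu hE hD B h10 h00
  choose r p hr hp hrp using hKexp
  obtain ⟨P, hP, hPf⟩ := HasQExp.prod Finset.univ (h := N) (F := fun c ↦ r c • K c)
    fun c _ ↦ ⟨p c, hp c, hrp c⟩
  -- Scaling each factor by the constant `r c` does not affect modularity of the product.
  set f₀ : ℍ → ℂ := ∏ c, r c • K c with hf₀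
  have hf₀' : f₀ = (∏ c, r c) • ∏ c, K c := by
    ext τ
    simp [hf₀, Finset.prod_mul_distrib]
  have hKs (γ : SL(2, ℤ)) (c : Orbits N) : K c ∣[(24 : ℤ)] γ = K (rmulOrbits γ c) := by
    induction c using Quotient.inductionOn with
    | h B => exact cross_slash hEs hDs γ B
  have hslash (γ : SL(2, ℤ)) :
      f₀ ∣[12 * ((2 * Fintype.card (Orbits N) : ℕ) : ℤ)] γ = f₀ := by
    have hw : 12 * ((2 * Fintype.card (Orbits N) : ℕ) : ℤ) =
        24 * (Finset.univ : Finset (Orbits N)).card := by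
      rw [Finset.card_univ]
      push_cast
      ring
    rw [hf₀', SL_smul_slash, hw, SL_slash, prod_slash]
    simp only [← SL_slash, hKs]
    rw [(rmulOrbits_bijective γ).prod_comp K]
    simp
  have hKhol (c : Orbits N) : MDiff (K c) := by
    induction c using Quotient.inductionOn with
    | h B =>
      have h1 := ModularFormClass.holo E
      have h2 := ModularFormClass.holo CuspForm.discriminant
      exact (h1.mul (h2.slash 12 _)).sub ((h1.slash 12 _).mul h2)
  have hhol : MDiff f₀ := by
    rw [hf₀']
    exact (MDifferentiable.prod fun c _ ↦ hKhol c).const_smul _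
  let f : ModularForm 𝒮ℒ (12 * ((2 * Fintype.card (Orbits N) : ℕ) : ℤ)) :=
    { toFun := f₀
      slash_action_eq' := fun _ ⟨γ, hγ⟩ ↦ hγ ▸ hslash γ
      holo' := hhol
      bdd_at_cusps' {c} hc := by
        rw [Subgroup.IsArithmetic.isCusp_iff_isCusp_SL2Z] at hc
        rw [OnePoint.isBoundedAt_iff_forall_SL2Z hc]
        intro γ _
        rw [hslash γ]
        exact hPf.isBoundedAtImInfty (NeZero.ne N) }
  obtain ⟨c, hc, hfc⟩ := HasQExp.intExp_of_nice (NeZero.ne N) f hP hPf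
  refine isIntegral_of_nice _ f hfc hc (θ := θ) ?_
  change f₀ θ = 0
  have hA : K (Quotient.mk _ A) θ = 0 := by
    rw [hK]
    have hσ : 0 < (toGL A).det.val := by
      rw [toGL_det]
      exact_mod_cast Nat.pos_of_ne_zero (NeZero.ne N)
    simp only [cross, Pi.sub_apply, Pi.mul_apply, slash_apply, hθ, σ, if_pos hσ,
      ContinuousAlgEquiv.refl_apply]
    ring
  rw [hf₀, Finset.prod_apply]
  refine Finset.prod_eq_zero (Finset.mem_univ (Quotient.mk _ A : Orbits N)) ?_
  rw [Pi.smul_apply, hA, smul_zero]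

/-! ### Matrices fixing an imaginary quadratic point -/

lemma exists_int_quadratic {z : ℂ} (hz : (minpoly ℚ z).degree = 2) :
    ∃ a b c : ℤ, 0 < a ∧ (a : ℂ) * z ^ 2 + b * z + c = 0 := by
  have hnd : (minpoly ℚ z).natDegree = 2 := Polynomial.natDegree_eq_of_degree_eq_some hz
  have hint : IsIntegral ℚ z := by
    by_contra h
    simp [minpoly.eq_zero h] at hz
  have hlead : (minpoly ℚ z).coeff 2 = 1 := by
    simpa [Polynomial.Monic, Polynomial.leadingCoeff, hnd] using minpoly.monic hint
  have h := minpoly.aeval ℚ z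
  rw [Polynomial.aeval_eq_sum_range, hnd] at h
  simp only [Finset.sum_range_succ, Finset.sum_range_zero, hlead, Algebra.smul_def] at h
  set β := (minpoly ℚ z).coeff 1
  set γ := (minpoly ℚ z).coeff 0
  refine ⟨β.den * γ.den, β.num * γ.den, γ.num * β.den,
    by exact_mod_cast Nat.mul_pos β.den_pos γ.den_pos, ?_⟩
  have hβ : (β : ℂ) * β.den = β.num := by exact_mod_cast Rat.mul_den_eq_num β
  have hγ : (γ : ℂ) * γ.den = γ.num := by exact_mod_cast Rat.mul_den_eq_num γ
  push_cast
  rw [← hβ, ← hγ]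
  simp at h
  linear_combination (β.den * γ.den : ℂ) * h

/-- An imaginary quadratic point is fixed by an integral matrix of positive non-square determinant.
If `aθ² + bθ + c = 0`, then `(x - b, -c; a, x)` fixes `θ` for every integer `x`. -/
lemma exists_fixing_matrix {θ : ℍ} (hθ : (minpoly ℚ (θ : ℂ)).degree = 2) :
    ∃ (N : ℕ) (_ : NeZero N) (A : Mat N), ¬ IsSquare N ∧ toGL A • θ = θ := by
  obtain ⟨a, b, c, ha, h⟩ := exists_int_quadratic hθ
  have hre := congrArg Complex.re h
  have him := congrArg Complex.im h
  simp [pow_two] at hre him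
  have hy := θ.im_pos
  have haR : (0 : ℝ) < a := by exact_mod_cast ha
  -- The imaginary part of the equation gives `2a Re θ + b = 0`, hence `D = -(2a Im θ)²`.
  have hD : b ^ 2 - 4 * a * c < 0 := by
    have h1 : (2 * a * θ.re + b : ℝ) = 0 := by
      have : θ.im * (2 * a * θ.re + b : ℝ) = 0 := by linear_combination him
      exact (mul_eq_zero.mp this).resolve_left hy.ne'
    have h2 : (b ^ 2 - 4 * a * c : ℝ) = - (2 * a * θ.im) ^ 2 := by
      linear_combination (-4 * a : ℝ) * hre + (2 * a * θ.re + b : ℝ) * h1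
    have h3 : (b ^ 2 - 4 * a * c : ℝ) < 0 := by rw [h2]; nlinarith [mul_pos haR hy]
    exact_mod_cast h3
  set D := b ^ 2 - 4 * a * c with hDdef
  -- Four times the determinant is `(2x - b)² + |D|`; for `2x - b > |D|` it lies strictly between
  -- two consecutive squares.
  set x : ℤ := |b| + 1 - D with hx
  have hb := neg_abs_le b
  have hb' := le_abs_self b
  set M := 2 * x - b with hM
  have hMpos : 0 < M := by linarith
  have hMD : -D < 2 * M := by linarith
  have h4N : 4 * (x ^ 2 - b * x + a * c) = M ^ 2 - D := by rw [hM, hDdef]; ring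
  have hNpos : 0 < x ^ 2 - b * x + a * c := by nlinarith
  obtain ⟨N, hN⟩ := Int.eq_ofNat_of_zero_le hNpos.le
  have : NeZero N := ⟨by rintro rfl; simp [hN] at hNpos⟩
  let A : Mat N := ⟨!![x - b, -c; a, x], by
    rw [Matrix.det_fin_two_of]
    linear_combination hN⟩
  have hdet : 0 < (toGL A).det.val := by
    rw [toGL_det]
    exact_mod_cast Nat.pos_of_ne_zero (NeZero.ne N)
  refine ⟨N, this, A, ?_, ?_⟩
  · rintro ⟨s, rfl⟩
    have hs : (2 * s : ℤ) ^ 2 = M ^ 2 - D := by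
      rw [← h4N, hN]
      push_cast
      ring
    have h1 : M < 2 * s := lt_of_pow_lt_pow_left₀ 2 (by positivity) (by linarith)
    have h2 : (2 * s : ℤ) < M + 1 := lt_of_pow_lt_pow_left₀ 2 (by positivity) (by nlinarith)
    linarith
  · ext1
    rw [coe_smul_of_det_pos hdet, div_eq_iff (denom_ne_zero _ θ)]
    simp only [num, denom, toGL_apply]
    simp [A]
    linear_combination -h

/-! ### Comparison with the lattice definition of `j` -/

/-- The lattice sum of weight `k` is `2ζ(k)` times the normalised Eisenstein series. -/
lemma tsum_lattice {k : ℕ} (hk : 3 ≤ k) (τ : ℍ) :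
    ∑' p : {p : ℤ × ℤ // p ≠ 0}, 1 / latticePt τ 1 p.1 ^ k =
      2 * riemannZeta k * (E (k := k) (by exact_mod_cast hk) τ) := by
  -- The junk value `1 / 0 = 0` lets the sum run over the whole lattice.
  have h1 : ∑' p : {p : ℤ × ℤ // p ≠ 0}, 1 / latticePt τ 1 p.1 ^ k =
      ∑' p : ℤ × ℤ, 1 / latticePt τ 1 p ^ k :=
    tsum_subtype_eq_of_support_subset (f := fun p : ℤ × ℤ ↦ 1 / latticePt τ 1 p ^ k)
      (s := {p | p ≠ 0}) (by
        rintro p hp rfl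
        simp [latticePt, show k ≠ 0 by lia] at hp)
  have h2 := tsum_eisSummand_eq_riemannZeta_mul_eisensteinSeries hk τ
  have h3 : ∑' v : Fin 2 → ℤ, eisSummand k v τ = ∑' p : ℤ × ℤ, 1 / latticePt τ 1 p ^ k := by
    rw [← (finTwoArrowEquiv ℤ).tsum_eq (fun p ↦ 1 / latticePt τ 1 p ^ k)]
    simp [eisSummand, latticePt]
  rw [h1, ← h3, h2]
  change _ = 2 * _ * ((1 / 2 : ℂ) • eisensteinSeries (N := 1) 0 k τ)
  rw [smul_eq_mul]
  ring

lemma g2_eq (τ : ℍ) : g2 τ = 4 / 3 * π ^ 4 * E₄ τ := by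
  have h := tsum_lattice (k := 4) (by norm_num) τ
  rw [Nat.cast_ofNat, riemannZeta_four] at h
  rw [g2, h]
  ring

lemma riemannZeta_six : riemannZeta 6 = π ^ 6 / 945 := by
  have h := riemannZeta_two_mul_nat (k := 3) (by norm_num)
  have hB : bernoulli 6 = 1 / 42 := by decide +kernel
  norm_num [hB, Nat.factorial] at h
  rw [h]
  ring

lemma g3_eq (τ : ℍ) : g3 τ = 8 / 27 * π ^ 6 * E₆ τ := by
  have h := tsum_lattice (k := 6) (by norm_num) τ
  rw [Nat.cast_ofNat, riemannZeta_six] at h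
  rw [g3, h]
  ring

/-- The lattice definition of `j` agrees with `E₄³ / Δ`. -/
lemma jfun_eq (τ : ℍ) : jfun τ = E₄ τ ^ 3 / discriminant τ := by
  have hπ : (π : ℂ) ≠ 0 := by exact_mod_cast Real.pi_ne_zero
  have h : g2 τ ^ 3 - 27 * g3 τ ^ 2 = (4 / 3 * π ^ 4) ^ 3 * (1728 * discriminant τ) := by
    rw [g2_eq, g3_eq, discriminant_eq_E₄_cube_sub_E₆_sq]
    ring
  rw [jfun, h, g2_eq]
  have := discriminant_ne_zero τ
  field_simp

end CMIntegral

theorem j_value_isIntegral_of_imaginary_quadratic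
    (θ : UpperHalfPlane) (hθ : (minpoly ℚ (θ : ℂ)).degree = 2) :
    IsIntegral ℤ (jfun θ) := by
  obtain ⟨N, _, A, hsq, hA⟩ := CMIntegral.exists_fixing_matrix hθ
  rw [CMIntegral.jfun_eq]
  exact CMIntegral.isIntegral_of_fixed hsq A hA
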